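/- The number of edges a(n) of the Catalan matroid polytope P(M_n) = P(M[E^n N^n, (EN)^n]) satisfies a(n) = (n²/2)·(1/(n+1))·binomial(2n,n) - (4^n/2 - (1/4)·binomial(2n+2,n+1)). -/

import Mathlib

/-!
The argument has a geometric half and an enumerative half.

*Geometry.* A base is an `n`-subset `B` of the step positions (the North steps) in which every
initial segment has at most half of its positions in `B`. The edges of the polytope are exactly the
segments joining `B` to `B - i + j` with `i ∈ B`, `j ∉ B`, `i < j` (`isExtreme_segment_iff`).
Such a set is again a base, since a North step is postponed, and the segment is a face already of
the hypersimplex `{0 ≤ x ≤ 1, ∑ x = n}`. Conversely, let the segment from `B` to `B'` be a face, and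
let `i`, `j` be the least elements of `B \ B'` and `B' \ B`, say `i < j`. Then `B - i + j` and
`B' - j + i` are both bases, and their indicator vectors have the same midpoint as those of `B`
and `B'`. Hence `B - i + j` lies on the segment, which forces `B - i + j = B'`.

*Enumeration.* The number of edges is therefore the sum over all bases of the number of pairs
`i < j` with `i ∈ B`, `j ∉ B`, and for a single base this number is `n (2n - 1) - n (n - 1) / 2 - ∑ B`
(`card_increasingPairs`). It remains to know the number of bases and the total of their element
sums. Both are computed for ballot sets with `k` elements in `m` positions, by induction on `m`
according to whether the last position is used (`card_ballotSets`, `sum_sum_ballotSets`). The total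
involves the partial sum `∑ j < k, m.choose j`, which for `m = 2n`, `k = n - 1` is half of `4 ^ n` up to
central binomial terms.
-/

open Finset

/-! ### Indicator vectors and the hypersimplex -/

/-- The lattice path of length `m` with North steps at the positions in `B` (counted from `0`) and East
steps elsewhere stays weakly below the diagonal: among the first `i` steps at most half are North. -/
def IsBallot {m : ℕ} (B : Finset (Fin m)) : Prop :=
  ∀ i ≤ m, 2 * #(B.filter fun j : Fin m => (j : ℕ) < i) ≤ i

/-- The indicator vector of `B`. -/
def ind {m : ℕ} (B : Finset (Fin m)) : Fin m → ℝ := fun i => if i ∈ B then 1 else 0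

/-- The indicator vectors of the ballot sets with `n` elements in `m` positions; for `m = 2 * n` these
are the vertices of the Catalan matroid polytope. -/
def vertices (n m : ℕ) : Set (Fin m → ℝ) :=
  {x | ∃ B : Finset (Fin m), #B = n ∧ IsBallot B ∧ x = ind B}

lemma ind_injective {m : ℕ} : Function.Injective (ind (m := m)) := by
  intro A B h
  ext i
  have := congrFun h i
  by_cases hA : i ∈ A <;> by_cases hB : i ∈ B <;> simp_all [ind]

/-- A 0/1 vector on a segment between two 0/1 vectors is an endpoint. -/
lemma eq_or_eq_of_ind_mem_segment {m : ℕ} {A A' B : Finset (Fin m)}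
    (h : ind B ∈ segment ℝ (ind A) (ind A')) : B = A ∨ B = A' := by
  obtain ⟨a, b, ha, hb, hab, h⟩ := h
  rcases ha.eq_or_lt with rfl | ha
  · right
    refine ind_injective ?_
    rw [← h, zero_add] at *
    simp [hab]
  · left
    ext i
    have := congrFun h i
    by_cases hA : i ∈ A <;> by_cases hA' : i ∈ A' <;> by_cases hB : i ∈ B <;>
      simp [ind, hA, hA', hB] at this ⊢ <;> linarith

/-- The polytope lies in the hypersimplex. -/
lemma convexHull_vertices_subset {n m : ℕ} {x : Fin m → ℝ} (hx : x ∈ convexHull ℝ (vertices n m)) :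
    (∀ i, 0 ≤ x i ∧ x i ≤ 1) ∧ ∑ i, x i = n := by
  have hconv : Convex ℝ {x : Fin m → ℝ | (∀ i, 0 ≤ x i ∧ x i ≤ 1) ∧ ∑ i, x i = n} := by
    intro x hx y hy a b ha hb hab
    refine ⟨fun i => ?_, ?_⟩
    · have h1 := hx.1 i
      have h2 := hy.1 i
      simp only [Pi.add_apply, Pi.smul_apply, smul_eq_mul]
      constructor <;> nlinarith
    · simp only [Pi.add_apply, Pi.smul_apply, smul_eq_mul, sum_add_distrib, ← mul_sum, hx.2, hy.2,
        ← add_mul, hab, one_mul]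
  refine convexHull_min ?_ hconv hx
  rintro _ ⟨B, hB, -, rfl⟩
  refine ⟨fun i => ?_, ?_⟩
  · unfold ind
    split_ifs <;> norm_num
  · simp [ind, hB]

lemma left_mem_extremePoints_segment {m : ℕ} {v w : Fin m → ℝ} (h : v ≠ w) :
    v ∈ (segment ℝ v w).extremePoints ℝ := by
  refine ⟨left_mem_segment ℝ v w, ?_⟩
  rintro _ ⟨a, s, ha, hs, has, rfl⟩ _ ⟨b, t, hb, ht, hbt, rfl⟩ ⟨c, d, hc, hd, hcd, h'⟩
  obtain ⟨k, hk⟩ := Function.ne_iff.1 h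
  have := congrFun h' k
  simp only [Pi.add_apply, Pi.smul_apply, smul_eq_mul] at this
  obtain rfl : a = 1 - s := by linarith
  obtain rfl : b = 1 - t := by linarith
  obtain rfl : c = 1 - d := by linarith
  have h0 : ((1 - d) * s + d * t) * (w k - v k) = 0 := by linarith
  rcases mul_eq_zero.1 h0 with h0 | h0
  · have h1 : (1 - d) * s = 0 := by nlinarith [mul_nonneg hc.le hs, mul_nonneg hd.le ht]
    have h2 : s = 0 := (mul_eq_zero.1 h1).resolve_left hc.ne'
    simp [h2]
  · exact absurd (sub_eq_zero.1 h0).symm hk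

/-! ### Exchanges between ballot sets -/

lemma card_exchange {m : ℕ} {B : Finset (Fin m)} {i j : Fin m} (hi : i ∈ B) (hj : j ∉ B) :
    #(insert j (B.erase i)) = #B := by
  rw [card_insert_of_notMem (fun h => hj (mem_of_mem_erase h)), card_erase_add_one hi]

/-- Replacing `i` by `j` does not increase the number of elements below `t`, unless `j < t ≤ i`. -/
lemma card_filter_exchange_le {m : ℕ} {B : Finset (Fin m)} {i j : Fin m} (hi : i ∈ B) {t : ℕ}
    (h : (j : ℕ) < t → (i : ℕ) < t) :
    #((insert j (B.erase i)).filter fun k : Fin m => (k : ℕ) < t) ≤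
      #(B.filter fun k : Fin m => (k : ℕ) < t) := by
  rw [filter_insert]
  split_ifs with hjt
  · have hi' : i ∈ B.filter fun k : Fin m => (k : ℕ) < t := mem_filter.2 ⟨hi, h hjt⟩
    rw [filter_erase, ← card_erase_add_one hi']
    exact card_insert_le _ _
  · exact card_le_card (filter_subset_filter _ (erase_subset _ _))

/-- Postponing a North step keeps the path below the diagonal. -/
lemma IsBallot.exchange {m : ℕ} {B : Finset (Fin m)} (hB : IsBallot B) {i j : Fin m} (hi : i ∈ B)
    (hij : i < j) : IsBallot (insert j (B.erase i)) := fun t ht =>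
  (Nat.mul_le_mul_left 2 (card_filter_exchange_le hi fun h => lt_trans hij h)).trans (hB t ht)

/-- Replacing a North step `j` of `B'` by a North step `i` of `B` keeps the path of `B'` below the
diagonal if no element of `B' \ B` precedes `j`: for `t ≤ j` the elements of the new set below `t`
then all belong to `B`. -/
lemma IsBallot.exchange_symm {m : ℕ} {B B' : Finset (Fin m)} (hB : IsBallot B) (hB' : IsBallot B')
    {i j : Fin m} (hi : i ∈ B) (hj : j ∈ B') (hmin : ∀ k ∈ B' \ B, j ≤ k) :
    IsBallot (insert i (B'.erase j)) := by
  intro t ht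
  by_cases h : (i : ℕ) < t → (j : ℕ) < t
  · exact (Nat.mul_le_mul_left 2 (card_filter_exchange_le hj h)).trans (hB' t ht)
  · refine (Nat.mul_le_mul_left 2 (card_le_card fun k hk => ?_)).trans (hB t ht)
    simp only [mem_filter, mem_insert, mem_erase] at hk ⊢
    refine ⟨?_, hk.2⟩
    rcases hk.1 with rfl | ⟨-, hkB'⟩
    · exact hi
    · by_contra hkB
      have := Fin.le_def.1 (hmin k (mem_sdiff.2 ⟨hkB', hkB⟩))
      omega

lemma ind_exchange_add {m : ℕ} {B B' : Finset (Fin m)} {i j : Fin m} (hi : i ∈ B) (hi' : i ∉ B')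
    (hj : j ∉ B) (hj' : j ∈ B') :
    ind (insert j (B.erase i)) + ind (insert i (B'.erase j)) = ind B + ind B' := by
  have hij : i ≠ j := fun h => hj (h ▸ hi)
  funext k
  simp only [Pi.add_apply, ind, mem_insert, mem_erase]
  by_cases hki : k = i
  · subst hki
    simp [hi, hi', hij]
  by_cases hkj : k = j
  · subst hkj
    simp [hj, hj', hki]
  simp [hki, hkj]

/-! ### The edges of the polytope -/

/-- The segment between two bases that differ by a single exchange is a face of the polytope. -/
lemma isExtreme_segment_exchange {n m : ℕ} {B : Finset (Fin m)} {i j : Fin m} (hi : i ∈ B)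
    (hj : j ∉ B) (hB : ind B ∈ vertices n m) (hB' : ind (insert j (B.erase i)) ∈ vertices n m) :
    IsExtreme ℝ (convexHull ℝ (vertices n m)) (segment ℝ (ind B) (ind (insert j (B.erase i)))) := by
  have hij : i ≠ j := fun h => hj (h ▸ hi)
  refine ⟨segment_subset_convexHull hB hB', fun x hx y hy z hz hzxy => ?_⟩
  obtain ⟨a, b, ha, hb, hab, rfl⟩ := hz
  obtain ⟨c, d, hc, hd, hcd, h⟩ := hzxy
  obtain ⟨hx1, hx2⟩ := convexHull_vertices_subset hx
  obtain ⟨hy1, -⟩ := convexHull_vertices_subset hy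
  have hBn := (convexHull_vertices_subset (subset_convexHull ℝ _ hB)).2
  -- Off `i` and `j` the segment is constant with value 0 or 1, the bounds of the hypersimplex, so `x`
  -- must take the same value there.
  have hoff : ∀ k, k ≠ i → k ≠ j → x k = ind B k := fun k hki hkj => by
    have hk := congrFun h k
    have h1 := hx1 k
    have h2 := hy1 k
    by_cases hkB : k ∈ B <;>
      simp [ind, hki, hkj, hkB] at hk ⊢ <;> nlinarith
  have hsum : x i + x j = 1 := by
    have h0 : ∑ k ∈ {i, j}, (x k - ind B k) = ∑ k, (x k - ind B k) :=
      sum_subset (subset_univ _) fun k _ hk => by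
        simp only [mem_insert, mem_singleton, not_or] at hk
        rw [hoff k hk.1 hk.2, sub_self]
    rw [sum_pair hij, sum_sub_distrib, hx2, hBn, sub_self] at h0
    simp [ind, hi, hj] at h0
    linarith
  refine ⟨x i, x j, (hx1 i).1, (hx1 j).1, hsum, funext fun k => ?_⟩
  simp only [Pi.add_apply, Pi.smul_apply, smul_eq_mul]
  by_cases hki : k = i
  · subst hki
    simp [ind, hi, hij]
  by_cases hkj : k = j
  · subst hkj
    simp [ind, hj]
  rw [hoff k hki hkj]
  simp only [ind, mem_insert, mem_erase, hki, hkj, ne_eq, not_false_eq_true, true_and, false_or]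
  rw [← add_mul, hsum, one_mul]

/-- Two bases that span a face differ by a single exchange. -/
lemma exists_exchange_of_isExtreme {n m : ℕ} {B B' : Finset (Fin m)} (hcard : #B = n)
    (hcard' : #B' = n) (hB : IsBallot B) (hB' : IsBallot B') {i j : Fin m} (hi : i ∈ B \ B')
    (hj : j ∈ B' \ B) (hmin : ∀ k ∈ B' \ B, j ≤ k) (hij : i < j)
    (h : IsExtreme ℝ (convexHull ℝ (vertices n m)) (segment ℝ (ind B) (ind B'))) :
    B' = insert j (B.erase i) := by
  obtain ⟨hi, hi'⟩ := mem_sdiff.1 hi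
  obtain ⟨hj', hj⟩ := mem_sdiff.1 hj
  have hA : ind (insert j (B.erase i)) ∈ convexHull ℝ (vertices n m) := subset_convexHull ℝ _
    ⟨_, (card_exchange hi hj).trans hcard, hB.exchange hi hij, rfl⟩
  have hA' : ind (insert i (B'.erase j)) ∈ convexHull ℝ (vertices n m) := subset_convexHull ℝ _
    ⟨_, (card_exchange hj' hi').trans hcard', hB.exchange_symm hB' hi hj' hmin, rfl⟩
  -- The common midpoint of the two pairs of bases lies on the face.
  have hmem := h.left_mem_of_mem_openSegment hA hA'
    (z := (1 / 2 : ℝ) • (ind B + ind B')) ⟨1 / 2, 1 / 2, by norm_num, by norm_num, by norm_num,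
      by rw [smul_add]⟩ ⟨1 / 2, 1 / 2, by norm_num, by norm_num, by norm_num,
      by rw [← smul_add, ind_exchange_add hi hi' hj hj']⟩
  rcases eq_or_eq_of_ind_mem_segment hmem with h | h
  · exact absurd (h ▸ mem_insert_self j _) hj
  · exact h.symm

/-- The edges of the polytope are the segments from a base `B` to `B - i + j`, where the North step `i`
is exchanged for a later East step `j`. -/
lemma isExtreme_segment_iff {n m : ℕ} {e : Set (Fin m → ℝ)} :
    ((∃ v w : Fin m → ℝ, v ≠ w ∧ e = segment ℝ v w) ∧
        IsExtreme ℝ (convexHull ℝ (vertices n m)) e) ↔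
      ∃ (B : Finset (Fin m)) (i j : Fin m), (#B = n ∧ IsBallot B) ∧ (i ∈ B ∧ j ∉ B ∧ i < j) ∧
        e = segment ℝ (ind B) (ind (insert j (B.erase i))) := by
  constructor
  · rintro ⟨⟨v, w, hvw, rfl⟩, he⟩
    have hv : v ∈ vertices n m := extremePoints_convexHull_subset
      (he.extremePoints_subset_extremePoints (left_mem_extremePoints_segment hvw))
    have hw : w ∈ vertices n m := extremePoints_convexHull_subset
      (he.extremePoints_subset_extremePoints
        (segment_symm ℝ v w ▸ left_mem_extremePoints_segment hvw.symm))
    obtain ⟨B, hc, hB, rfl⟩ := hv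
    obtain ⟨B', hc', hB', rfl⟩ := hw
    have hne : B ≠ B' := fun h => hvw (congrArg ind h)
    have h1 : (B \ B').Nonempty := sdiff_nonempty.2 fun h =>
      hne (eq_of_subset_of_card_le h (hc'.trans hc.symm).le)
    have h2 : (B' \ B).Nonempty := sdiff_nonempty.2 fun h =>
      hne.symm (eq_of_subset_of_card_le h (hc.trans hc'.symm).le)
    have hi := min'_mem _ h1
    have hj := min'_mem _ h2
    rcases lt_trichotomy ((B \ B').min' h1) ((B' \ B).min' h2) with h | h | h
    · refine ⟨B, _, _, ⟨hc, hB⟩, ⟨(mem_sdiff.1 hi).1, (mem_sdiff.1 hj).2, h⟩, ?_⟩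
      rw [← exists_exchange_of_isExtreme hc hc' hB hB' hi hj (fun k hk => min'_le _ k hk) h he]
    · exact absurd (mem_sdiff.1 hi).1 (h ▸ (mem_sdiff.1 hj).2)
    · refine ⟨B', _, _, ⟨hc', hB'⟩, ⟨(mem_sdiff.1 hj).1, (mem_sdiff.1 hi).2, h⟩, ?_⟩
      rw [segment_symm] at he ⊢
      rw [← exists_exchange_of_isExtreme hc' hc hB' hB hj hi (fun k hk => min'_le _ k hk) h he]
  · rintro ⟨B, i, j, ⟨hc, hB⟩, ⟨hi, hj, hij⟩, rfl⟩
    refine ⟨⟨_, _, fun h => hj ?_, rfl⟩, isExtreme_segment_exchange hi hj ⟨B, hc, hB, rfl⟩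
      ⟨_, (card_exchange hi hj).trans hc, hB.exchange hi hij, rfl⟩⟩
    rw [ind_injective h]
    exact mem_insert_self _ _

/-- Each edge arises from only one triple `(B, i, j)`; the condition `i < j` fixes its orientation. -/
lemma exchange_inj {m : ℕ} {A B : Finset (Fin m)} {i j k l : Fin m} (hi : i ∈ A) (hj : j ∉ A)
    (hij : i < j) (hk : k ∈ B) (hl : l ∉ B) (hkl : k < l)
    (h : segment ℝ (ind A) (ind (insert j (A.erase i))) =
      segment ℝ (ind B) (ind (insert l (B.erase k)))) : A = B ∧ i = k ∧ j = l := by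
  have h1 := eq_or_eq_of_ind_mem_segment (h ▸ left_mem_segment ℝ (ind A) _)
  have h2 := eq_or_eq_of_ind_mem_segment (h ▸ right_mem_segment ℝ (ind A) _)
  have hAA : insert j (A.erase i) ≠ A := fun h => hj (h ▸ mem_insert_self j _)
  have hjmem : j ∈ insert j (A.erase i) := mem_insert_self j _
  have himem : i ∉ insert j (A.erase i) := by simp [hij.ne]
  rcases h1 with rfl | h1
  · rcases h2 with h2 | h2
    · exact absurd h2 hAA
    · rw [h2] at himem hjmem
      simp only [mem_insert, mem_erase, hi, hj, and_false, or_false, and_true, not_or,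
        not_not] at himem hjmem
      exact ⟨rfl, himem.2, hjmem⟩
  · rcases h2 with h2 | h2
    · rw [h2] at himem hjmem
      rw [h1] at hi hj
      simp only [mem_insert, mem_erase, himem, hjmem, and_false, or_false, and_true, not_or,
        not_not] at hi hj
      exact absurd (hi ▸ hj.2 ▸ hij) hkl.asymm
    · exact absurd (h2.trans h1.symm) hAA

/-! ### Counting the edges by pairs of positions -/

instance {m : ℕ} (B : Finset (Fin m)) : Decidable (IsBallot B) := by
  unfold IsBallot; infer_instance

/-- The ballot sets with `n` elements in `m` positions. -/
def bases (n m : ℕ) : Finset (Finset (Fin m)) := univ.filter fun B => #B = n ∧ IsBallot B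

/-- The pairs consisting of a North step and a later East step. -/
def increasingPairs {m : ℕ} (B : Finset (Fin m)) : Finset (Fin m × Fin m) :=
  univ.filter fun p => p.1 ∈ B ∧ p.2 ∉ B ∧ p.1 < p.2

lemma card_edges (n m : ℕ) :
    Nat.card {e : Set (Fin m → ℝ) // (∃ v w : Fin m → ℝ, v ≠ w ∧ e = segment ℝ v w) ∧
        IsExtreme ℝ (convexHull ℝ (vertices n m)) e} =
      ∑ B ∈ bases n m, #(increasingPairs B) := by
  rw [← card_sigma, ← Fintype.card_coe, ← Nat.card_eq_fintype_card]
  have hT : ∀ t : (bases n m).sigma increasingPairs, (#t.1.1 = n ∧ IsBallot t.1.1) ∧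
      (t.1.2.1 ∈ t.1.1 ∧ t.1.2.2 ∉ t.1.1 ∧ t.1.2.1 < t.1.2.2) := fun t => by
    have := mem_sigma.1 t.2
    simpa [bases, increasingPairs] using this
  symm
  refine Nat.card_eq_of_bijective (fun t : (bases n m).sigma increasingPairs =>
    ⟨segment ℝ (ind t.1.1) (ind (insert t.1.2.2 (t.1.1.erase t.1.2.1))),
      isExtreme_segment_iff.2 ⟨_, _, _, (hT t).1, (hT t).2, rfl⟩⟩) ⟨?_, ?_⟩
  · rintro ⟨⟨A, i, j⟩, hA⟩ ⟨⟨B, k, l⟩, hB⟩ h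
    obtain ⟨-, hi, hj, hij⟩ := hT ⟨⟨A, i, j⟩, hA⟩
    obtain ⟨-, hk, hl, hkl⟩ := hT ⟨⟨B, k, l⟩, hB⟩
    obtain ⟨rfl, rfl, rfl⟩ := exchange_inj hi hj hij hk hl hkl (congrArg Subtype.val h)
    rfl
  · rintro ⟨e, he⟩
    obtain ⟨B, i, j, h1, h2, rfl⟩ := isExtreme_segment_iff.1 he
    exact ⟨⟨⟨B, i, j⟩, by simp [bases, increasingPairs, h1, h2]⟩, rfl⟩

lemma two_mul_sum_card_filter_lt {α : Type*} [LinearOrder α] (B : Finset α) :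
    2 * ∑ i ∈ B, #(B.filter (i < ·)) + #B = #B * #B := by
  have h1 : ∑ i ∈ B, #(B.filter (i < ·)) = ∑ i ∈ B, #(B.filter (· < i)) :=
    sum_card_bipartiteAbove_eq_sum_card_bipartiteBelow (· < ·)
  rw [two_mul]
  nth_rw 2 [h1]
  rw [card_eq_sum_ones B, ← sum_add_distrib, ← sum_add_distrib, ← card_eq_sum_ones, ← smul_eq_mul,
    ← sum_const]
  refine sum_congr rfl fun i hi => ?_
  rw [← card_erase_add_one hi, ← card_union_of_disjoint]
  · congr 2
    ext k
    simp only [mem_union, mem_filter, mem_erase]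
    grind
  · exact disjoint_left.2 fun k h h' => lt_asymm (mem_filter.1 h).2 (mem_filter.1 h').2

/-- A position `b` of `B` has `m - 1 - b` later positions; over all of `B`, exactly the pairs inside `B`
have to be discarded. -/
lemma card_increasingPairs {m : ℕ} (B : Finset (Fin m)) :
    (#(increasingPairs B) : ℚ) =
      #B * ((m : ℚ) - 1) - ∑ b ∈ B, ((b : ℕ) : ℚ) - (#B * (#B - 1) : ℚ) / 2 := by
  have h1 : #(increasingPairs B) = ∑ i ∈ B, #(Bᶜ.filter (i < ·)) := by
    rw [← card_sigma]
    refine card_bij' (fun p _ => ⟨p.1, p.2⟩) (fun p _ => (p.1, p.2)) ?_ ?_ ?_ ?_ <;>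
      simp [increasingPairs]
  have h2 : ∀ i : Fin m, (#(Bᶜ.filter (i < ·)) : ℚ) + #(B.filter (i < ·)) =
      (m : ℚ) - 1 - (i : ℕ) := by
    intro i
    have : #(Bᶜ.filter (i < ·)) + #(B.filter (i < ·)) = #(Finset.Ioi i) := by
      rw [← card_union_of_disjoint]
      · congr 1
        ext k
        simp only [mem_union, mem_filter, mem_compl, mem_Ioi]
        tauto
      · exact disjoint_left.2 fun k h h' =>
          (mem_compl.1 (mem_filter.1 h).1) (mem_filter.1 h').1
    rw [Fin.card_Ioi] at this
    have h3 : #(Bᶜ.filter (i < ·)) + #(B.filter (i < ·)) + 1 + (i : ℕ) = m := by omega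
    rw [← @Nat.cast_inj ℚ] at h3
    push_cast at h3
    linarith
  have h3 := two_mul_sum_card_filter_lt B
  rw [← @Nat.cast_inj ℚ] at h3
  push_cast at h3
  have h4 := sum_congr rfl fun i (_ : i ∈ B) => h2 i
  rw [sum_add_distrib, sum_sub_distrib, sum_const, nsmul_eq_mul] at h4
  rw [h1]
  push_cast
  linarith

/-! ### Enumeration of ballot sets -/

/-- The ballot sets with `k` elements in `m` positions, as sets of natural numbers, so that the sets for
`m` and `m + 1` can be compared. -/
def ballotSets (m k : ℕ) : Finset (Finset ℕ) :=
  ((range m).powersetCard k).filter fun B => ∀ i ≤ m, 2 * #(B.filter (· < i)) ≤ i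

lemma ballotSets_zero (m : ℕ) : ballotSets m 0 = {∅} := by
  ext B
  simp only [ballotSets, powersetCard_zero, mem_filter, mem_singleton]
  constructor
  · exact fun h => h.1
  · rintro rfl
    simp

lemma ballotSets_eq_empty {m k : ℕ} (h : m < 2 * k) : ballotSets m k = ∅ := by
  ext B
  simp only [ballotSets, mem_filter, mem_powersetCard, notMem_empty, iff_false]
  rintro ⟨⟨hB, hk⟩, hb⟩
  have h1 := hb m le_rfl
  rw [filter_true_of_mem (fun x hx => mem_range.1 (hB hx)), hk] at h1
  omega

/-- A ballot set in `m + 1` positions either avoids the last position `m` or contains it. The bound on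
`k` makes the condition on the full path automatic. -/
lemma sum_ballotSets_succ (φ : Finset ℕ → ℚ) {m k : ℕ} (h : 2 * (k + 1) ≤ m + 1) :
    ∑ B ∈ ballotSets (m + 1) (k + 1), φ B =
      ∑ B ∈ ballotSets m (k + 1), φ B + ∑ B ∈ ballotSets m k, φ (insert m B) := by
  have key : ballotSets (m + 1) (k + 1) =
      ballotSets m (k + 1) ∪ (ballotSets m k).image (insert m) := by
    unfold ballotSets
    rw [range_add_one, powersetCard_succ_insert notMem_range_self, filter_union, filter_image]
    congr 1
    · refine filter_congr fun B hB => ⟨fun hb i hi => hb i (by omega), fun hb i hi => ?_⟩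
      rcases Nat.lt_or_ge m i with hm | hm
      · have := card_filter_le B (· < i)
        rw [(mem_powersetCard.1 hB).2] at this
        omega
      · exact hb i hm
    · congr 1
      refine filter_congr fun B hB => ?_
      have h0 : ∀ i ≤ m, (insert m B).filter (· < i) = B.filter (· < i) := fun i hi => by
        rw [filter_insert, if_neg (by omega)]
      refine ⟨fun hb i hi => h0 i hi ▸ hb i (by omega), fun hb i hi => ?_⟩
      rcases Nat.lt_or_ge m i with hm | hm
      · have h1 := card_filter_le (insert m B) (· < i)
        have h2 := card_insert_le m B
        rw [(mem_powersetCard.1 hB).2] at h2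
        omega
      · exact h0 i hm ▸ hb i hm
  have hnot : ∀ l, ∀ B ∈ ballotSets m l, m ∉ B := fun l B hB hm => by
    have := (mem_powersetCard.1 (mem_filter.1 hB).1).1 hm
    simp at this
  rw [key, sum_union, sum_image]
  · intro A hA B hB hAB
    rw [← erase_insert (hnot k A hA), ← erase_insert (hnot k B hB)]
    exact congrArg (fun S => S.erase m) hAB
  · refine disjoint_left.2 fun B hB hB' => ?_
    obtain ⟨A, -, rfl⟩ := mem_image.1 hB'
    exact hnot _ _ hB (mem_insert_self _ _)

/-- The absorption identity, over `ℚ` in order to avoid truncated subtraction. -/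
lemma absorb (m k : ℕ) :
    ((k : ℚ) + 1) * (m.choose (k + 1) : ℚ) = ((m : ℚ) - k) * (m.choose k : ℚ) := by
  rcases Nat.lt_or_ge m k with h | h
  · simp [Nat.choose_eq_zero_of_lt h, Nat.choose_eq_zero_of_lt (Nat.lt_succ_of_lt h)]
  · have := Nat.choose_succ_right_eq m k
    rw [← Nat.cast_sub h]
    push_cast [← @Nat.cast_inj ℚ] at this
    linarith

/-- The ballot numbers. The range of `k` includes the boundary `2 * k = m + 1`, where both sides vanish;
the induction needs this case. -/
lemma card_ballotSets (m k : ℕ) (h : 2 * k ≤ m + 1) :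
    ((m : ℚ) + 1) * (#(ballotSets m k) : ℚ) = ((m : ℚ) + 1 - 2 * k) * ((m + 1).choose k : ℚ) := by
  induction m generalizing k with
  | zero =>
    obtain rfl : k = 0 := by omega
    simp [ballotSets_zero]
  | succ m ih =>
    cases k with
    | zero => simp [ballotSets_zero]
    | succ k =>
      rcases Nat.lt_or_ge (m + 1) (2 * (k + 1)) with hk | hk
      · have : m = 2 * k := by omega
        subst this
        simp only [ballotSets_eq_empty hk, card_empty]
        push_cast
        ring
      · have h1 := ih (k + 1) (by omega)
        have h2 := ih k (by omega)
        have h3 := sum_ballotSets_succ (fun _ => 1) hk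
        simp only [sum_const, nsmul_eq_mul, mul_one] at h3
        have hm : ((m : ℚ) + 1) ≠ 0 := by positivity
        rw [h3, ← mul_right_inj' hm]
        have h4 := absorb (m + 1) k
        rw [Nat.choose_succ_succ (m + 1) k]
        push_cast at *
        linear_combination (m + 2 : ℚ) * h1 + (m + 2 : ℚ) * h2 - 2 * h4

/-- Pascal's rule for partial sums of a row. -/
lemma sum_choose_succ (m k : ℕ) :
    ∑ j ∈ range (k + 1), ((m + 1).choose j : ℚ) =
      ∑ j ∈ range (k + 1), (m.choose j : ℚ) + ∑ j ∈ range k, (m.choose j : ℚ) := by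
  rw [sum_range_succ', sum_range_succ']
  simp only [Nat.choose_succ_succ, Nat.cast_add, sum_add_distrib, Nat.choose_zero_right]
  ring

/-- The total of all elements of all ballot sets with `k + 1` elements in `m` positions. Both terms in
the last factor come from the recurrence: partial row sums of binomial coefficients satisfy it without
a source term, and the multiple of `m.choose k` absorbs the source `m * #(ballotSets m k)`. -/
lemma sum_sum_ballotSets (m k : ℕ) (h : 2 * (k + 1) ≤ m + 1) :
    ∑ B ∈ ballotSets m (k + 1), ∑ b ∈ B, (b : ℚ) =
      ((m : ℚ) - 1 - 2 * k) *
        ((m : ℚ) / 2 * (m.choose k : ℚ) + ∑ j ∈ range k, (m.choose j : ℚ)) := by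
  induction m generalizing k with
  | zero => omega
  | succ m ih =>
    rcases Nat.lt_or_ge (m + 1) (2 * (k + 1)) with hk | hk
    · have : m = 2 * k := by omega
      subst this
      simp [ballotSets_eq_empty hk]
    · have h1 := ih k hk
      have hins : ∑ B ∈ ballotSets m k, ∑ b ∈ insert m B, (b : ℚ) =
          m * #(ballotSets m k) + ∑ B ∈ ballotSets m k, ∑ b ∈ B, (b : ℚ) := by
        rw [mul_comm, ← nsmul_eq_mul, ← sum_const, ← sum_add_distrib]
        refine sum_congr rfl fun B hB => sum_insert fun hm => ?_
        have := (mem_powersetCard.1 (mem_filter.1 hB).1).1 hm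
        simp at this
      rw [sum_ballotSets_succ _ hk, hins, h1]
      have h2 := card_ballotSets m k (by omega)
      cases k with
      | zero =>
        simp [ballotSets_zero]
        ring
      | succ k =>
        rw [ih k (by omega)]
        have hm : ((m : ℚ) + 1) ≠ 0 := by positivity
        rw [← mul_right_inj' hm]
        have h4 := absorb m k
        rw [sum_choose_succ, sum_range_succ _ k]
        rw [Nat.choose_succ_succ m k] at *
        push_cast at *
        linear_combination (m : ℚ) * h2 + (1 - m : ℚ) * h4

/-! ### Evaluation of the edge count -/

/-- Passage from positions in `Fin m` to natural numbers. -/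
lemma sum_bases (φ : Finset ℕ → ℚ) (n m : ℕ) :
    ∑ B ∈ bases n m, φ (B.map Fin.valEmbedding) = ∑ B ∈ ballotSets m n, φ B := by
  have hf : ∀ (B : Finset (Fin m)) (i : ℕ), #((B.map Fin.valEmbedding).filter (· < i)) =
      #(B.filter fun j : Fin m => (j : ℕ) < i) := fun B i => by
    rw [filter_map, card_map]
    rfl
  refine sum_nbij (fun B => B.map Fin.valEmbedding) (fun B hB => ?_)
    (fun A _ B _ h => map_injective _ h) (fun B hB => ?_) fun _ _ => rfl
  · obtain ⟨h1, h2⟩ := (mem_filter.1 hB).2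
    refine mem_filter.2 ⟨mem_powersetCard.2 ⟨fun x hx => ?_, by rw [card_map, h1]⟩,
      fun i hi => by rw [hf]; exact h2 i hi⟩
    obtain ⟨y, -, rfl⟩ := mem_map.1 hx
    exact mem_range.2 y.2
  · obtain ⟨h1, h2⟩ := mem_filter.1 (mem_coe.1 hB)
    obtain ⟨h1, h3⟩ := mem_powersetCard.1 h1
    have hlt : ∀ x ∈ B, x < m := fun x hx => mem_range.1 (h1 hx)
    have hmap := map_valEmbedding_attachFin hlt
    refine ⟨B.attachFin hlt, mem_coe.2 (mem_filter.2 ⟨mem_univ _, by rw [card_attachFin, h3],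
      fun i hi => ?_⟩), hmap⟩
    rw [← hf, hmap]
    exact h2 i hi

/-- The row `2 * (n + 1)` is symmetric about its central entry. -/
lemma two_mul_sum_choose (n : ℕ) :
    2 * ∑ j ∈ range (n + 1), ((2 * (n + 1)).choose j : ℚ) + ((2 * (n + 1)).choose (n + 1) : ℚ) =
      4 ^ (n + 1) := by
  have h1 : ∑ j ∈ range (n + 1), ((2 * n + 1).choose j : ℚ) = 4 ^ n := by
    exact_mod_cast Nat.sum_range_choose_halfway n
  have h2 := sum_choose_succ (2 * n + 1) n
  have h3 := sum_range_succ (fun j => ((2 * n + 1).choose j : ℚ)) n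
  have h4 : ((2 * (n + 1)).choose (n + 1) : ℚ) = 2 * (2 * n + 1).choose n := by
    rw [show 2 * (n + 1) = 2 * n + 1 + 1 by ring, Nat.choose_succ_succ, Nat.succ_eq_add_one,
      Nat.choose_symm_half]
    push_cast
    ring
  rw [h4, show 2 * (n + 1) = 2 * n + 1 + 1 by ring, h2]
  rw [h1] at *
  rw [pow_succ]
  linarith

/-- the number of edges `a n` of the Catalan matroid polytope
`P(M_n) = P(M[Eⁿ Nⁿ, (EN)ⁿ])` (whose vertices are the indicator vectors of the `n`-subsets
`B` of the `2n` step positions with all prefix North-counts `≤` prefix East-counts) satisfies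
`a n = (n²/2)·(1/(n+1))·(2n).choose n - (4ⁿ/2 - (1/4)·(2n+2).choose (n+1))`. -/
theorem stmt9 (n : ℕ) :
    (Nat.card {e : Set (Fin (2 * n) → ℝ) //
        (∃ v w : Fin (2 * n) → ℝ, v ≠ w ∧ e = segment ℝ v w) ∧
        IsExtreme ℝ
          (convexHull ℝ {x : Fin (2 * n) → ℝ |
            ∃ B : Finset (Fin (2 * n)), B.card = n ∧
              (∀ i ≤ 2 * n, 2 * (B.filter (fun j : Fin (2 * n) => (j : ℕ) < i)).card ≤ i) ∧
              x = fun i => if i ∈ B then 1 else 0}) e} : ℚ)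
      = (n : ℚ) ^ 2 / 2 * (1 / ((n : ℚ) + 1)) * (Nat.choose (2 * n) n : ℚ)
        - (4 ^ n / 2 - (1 / 4) * (Nat.choose (2 * n + 2) (n + 1) : ℚ)) := by
  have hedges := congrArg (Nat.cast : ℕ → ℚ) (card_edges n (2 * n))
  refine hedges.trans ?_
  rw [Nat.cast_sum]
  have hinv : ∀ B ∈ bases n (2 * n), (#(increasingPairs B) : ℚ) =
      (3 * n ^ 2 - n : ℚ) / 2 - ∑ b ∈ B.map Fin.valEmbedding, (b : ℚ) := fun B hB => by
    rw [card_increasingPairs, (mem_filter.1 hB).2.1, sum_map]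
    push_cast
    simp only [Fin.valEmbedding_apply]
    ring
  rw [sum_congr rfl hinv,
    sum_bases (fun B => (3 * n ^ 2 - n : ℚ) / 2 - ∑ b ∈ B, (b : ℚ)), sum_sub_distrib, sum_const,
    nsmul_eq_mul]
  -- For `n = 0` the element sums are not covered by `sum_sum_ballotSets`.
  cases n with
  | zero => norm_num [ballotSets_zero]
  | succ n =>
    rw [sum_sum_ballotSets (2 * (n + 1)) n (by omega)]
    have hcard := card_ballotSets (2 * (n + 1)) (n + 1) (by omega)
    have hT := two_mul_sum_choose n
    rw [sum_range_succ] at hT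
    have h1 := absorb (2 * (n + 1)) n
    have h2 := absorb (2 * (n + 1)) (n + 1)
    have h3 : ((2 * (n + 1) + 1).choose (n + 1) : ℚ) =
        (2 * (n + 1)).choose n + (2 * (n + 1)).choose (n + 1) := by
      rw [Nat.choose_succ_succ]; push_cast; rfl
    have h4 : ((2 * (n + 1) + 2).choose (n + 1 + 1) : ℚ) = 2 * (2 * (n + 1) + 1).choose (n + 1) := by
      rw [Nat.choose_succ_succ, Nat.succ_eq_add_one, Nat.choose_symm_half]
      push_cast
      ring
    rw [h4, h3]
    rw [h3] at hcard
    generalize ((2 * (n + 1)).choose n : ℚ) = b at *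
    generalize ((2 * (n + 1)).choose (n + 1) : ℚ) = c at *
    push_cast at *
    have hb : b = (n + 1) * c / (n + 2) := by
      field_simp
      linear_combination -h1
    have hc : (#(ballotSets (2 * (n + 1)) (n + 1)) : ℚ) = c / (n + 2) := by
      have h5 : (2 * (n + 1) + 1 : ℚ) ≠ 0 := by positivity
      rw [← mul_right_inj' h5, hcard, hb]
      field_simp
      ring
    have hS : ∑ j ∈ range n, ((2 * (n + 1)).choose j : ℚ) = (4 ^ (n + 1) - c) / 2 - b := by
      linear_combination hT / 2
    rw [hc, hS, hb]
    field_simp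
    ring
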